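/- For every permutation class C, exactly one of the following occurs: either |C_n| ≥ F_n for all n (where F_n is the nth Fibonacci number with F_1 = F_2 = 1), or C lies in Grid(M) for some matrix M with entries in {0, 1, −1} whose bipartite graph is a matching and there is a polynomial p(n) such that |C_n| = p(n) for all sufficiently large n. -/

import Mathlib

/-- `σ ≤ π`: the permutation `π` contains the pattern `σ`, i.e. `π` has a subsequence
in the same relative order as `σ`. -/
def PermContains {k n : ℕ} (σ : Equiv.Perm (Fin k)) (π : Equiv.Perm (Fin n)) : Prop :=
  ∃ f : Fin k → Fin n, StrictMono f ∧ ∀ i j : Fin k, σ i < σ j ↔ π (f i) < π (f j)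

/-- A permutation class: a set of permutations (of each length) closed downward
under the containment order. -/
def IsPermClass (C : ∀ n : ℕ, Set (Equiv.Perm (Fin n))) : Prop :=
  ∀ (k n : ℕ) (σ : Equiv.Perm (Fin k)) (π : Equiv.Perm (Fin n)),
    π ∈ C n → PermContains σ π → σ ∈ C k
/-- The point `i` (with value `π i`) lies in the block of the gridding `(c, r)`
indexed by column `k` and row `l`. -/
def InBlock {n t u : ℕ} (π : Equiv.Perm (Fin n)) (c : Fin (t + 1) → ℕ) (r : Fin (u + 1) → ℕ)
    (k : Fin t) (l : Fin u) (i : Fin n) : Prop :=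
  c k.castSucc ≤ (i : ℕ) ∧ (i : ℕ) < c k.succ ∧
    r l.castSucc ≤ (π i : ℕ) ∧ (π i : ℕ) < r l.succ

/-- `(c, r)` is an `M`-gridding of `π`: each block is increasing, decreasing or empty
according to the corresponding entry of the `t × u` matrix `M` (entries in {0, 1, -1},
columns indexed by `Fin t`, rows by `Fin u`). -/
def IsGridding {n t u : ℕ} (M : Fin t → Fin u → SignType) (π : Equiv.Perm (Fin n))
    (c : Fin (t + 1) → ℕ) (r : Fin (u + 1) → ℕ) : Prop :=
  Monotone c ∧ Monotone r ∧ c 0 = 0 ∧ c (Fin.last t) = n ∧ r 0 = 0 ∧ r (Fin.last u) = n ∧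
    ∀ (k : Fin t) (l : Fin u),
      (M k l = 1 → ∀ i j : Fin n,
        InBlock π c r k l i → InBlock π c r k l j → i < j → π i < π j) ∧
      (M k l = -1 → ∀ i j : Fin n,
        InBlock π c r k l i → InBlock π c r k l j → i < j → π j < π i) ∧
      (M k l = 0 → ∀ i : Fin n, ¬ InBlock π c r k l i)

/-- `π ∈ Grid(M)`: the permutation `π` possesses an `M`-gridding. -/
def InGrid {n t u : ℕ} (M : Fin t → Fin u → SignType) (π : Equiv.Perm (Fin n)) : Prop :=
  ∃ c r, IsGridding M π c r
/-- The bipartite graph `G(M)` is a matching: every vertex (column or row) is incident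
to at most one edge, i.e. every column and every row of `M` has at most one nonzero entry. -/
def IsMatchingMat {t u : ℕ} (M : Fin t → Fin u → SignType) : Prop :=
  (∀ (k : Fin t) (l l' : Fin u), M k l ≠ 0 → M k l' ≠ 0 → l = l') ∧
  (∀ (k k' : Fin t) (l : Fin u), M k l ≠ 0 → M k' l ≠ 0 → k = k')

/-!
Call a position `x` of `π` a non-bond if the values at `x` and `x + 1` are separated by a third
value. By Mirsky's theorem, a permutation with many non-bonds contains a long sequence of non-bonds
whose value intervals, positions and separating points are arranged in one of a few regular ways,
and each such arrangement contains at least `F_n` patterns of length `n`. So if `|C_n| < F_n` for a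
single `n`, the number of non-bonds in the members of `C` is bounded by some `K - 1`.

The non-bonds cut every member of `C` into at most `K` blocks, each occupying an interval of
positions and an interval of values on which it is monotone; this is a gridding by a matching. The
permutation is determined by the relative order of its blocks, for which there are finitely many
choices, and by the vector of block lengths. Deleting an inner point of a block only lowers its
length, so for a fixed relative order the length vectors are closed under decreasing coordinates
that are at least `3`. The generating function of such a set, by coordinate sum, is rational with
its only pole at `1`, hence its coefficients are eventually polynomial. A polynomial cannot dominate
the Fibonacci numbers, which makes the two cases exclusive.
-/

section RationalSeries

variable {R : Type*} [CommRing R] {φ ψ : PowerSeries R}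

/-- The power series `φ` is the expansion of a rational function whose only possible pole
is at `1`. -/
def HasPoleOnlyAtOne (φ : PowerSeries R) : Prop :=
  ∃ (d : ℕ) (q : Polynomial R), φ * (1 - PowerSeries.X) ^ d = (q : PowerSeries R)

namespace HasPoleOnlyAtOne

lemma add (hφ : HasPoleOnlyAtOne φ) (hψ : HasPoleOnlyAtOne ψ) : HasPoleOnlyAtOne (φ + ψ) := by
  obtain ⟨d, q, hq⟩ := hφ
  obtain ⟨e, r, hr⟩ := hψ
  refine ⟨d + e, q * (1 - Polynomial.X) ^ e + r * (1 - Polynomial.X) ^ d, ?_⟩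
  push_cast
  rw [← hq, ← hr]
  ring

lemma sum {ι : Type*} {s : Finset ι} {φ : ι → PowerSeries R}
    (h : ∀ i ∈ s, HasPoleOnlyAtOne (φ i)) : HasPoleOnlyAtOne (∑ i ∈ s, φ i) :=
  Finset.sum_induction φ HasPoleOnlyAtOne (fun _ _ ↦ add) ⟨0, 0, by simp⟩ h

lemma X_mul (hφ : HasPoleOnlyAtOne φ) : HasPoleOnlyAtOne (PowerSeries.X * φ) := by
  obtain ⟨d, q, hq⟩ := hφ
  exact ⟨d, Polynomial.X * q, by push_cast; rw [← hq, mul_assoc]⟩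

lemma of_mul_one_sub_X (h : HasPoleOnlyAtOne (φ * (1 - PowerSeries.X))) : HasPoleOnlyAtOne φ := by
  obtain ⟨d, q, hq⟩ := h
  exact ⟨d + 1, q, by rw [← hq, pow_succ', mul_assoc]⟩

lemma coeff_eventually_eq_eval {F : Type*} [Field F] [CharZero F] {φ : PowerSeries F}
    (hφ : HasPoleOnlyAtOne φ) :
    ∃ (p : Polynomial F) (N : ℕ), ∀ n : ℕ, N ≤ n → PowerSeries.coeff n φ = p.eval (n : F) := by
  obtain ⟨d, q, hq⟩ := hφ
  refine ⟨q.hilbertPoly d, q.natDegree + 1, fun n hn ↦ ?_⟩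
  rw [← Polynomial.coeff_mul_invOneSubPow_eq_hilbertPoly_eval d (by lia : q.natDegree < n), ← hq,
    mul_assoc, ← PowerSeries.invOneSubPow_inv_eq_one_sub_pow,
    (PowerSeries.invOneSubPow F d).inv_val, mul_one]

end HasPoleOnlyAtOne

end RationalSeries

instance wellFoundedLT_lowerSet {α : Type*} [Preorder α] [WellQuasiOrderedLE α] :
    WellFoundedLT (LowerSet α) := by
  refine ⟨wellFounded_iff_isEmpty_descending_chain.2 ⟨fun ⟨f, hf⟩ ↦ ?_⟩⟩
  choose v hv hv' using fun n ↦ Set.exists_of_ssubset (LowerSet.coe_ssubset_coe.2 (hf n))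
  obtain ⟨m, n, hmn, hle⟩ := wellQuasiOrdered_le v
  have hmem : v n ∈ f (m + 1) := antitone_nat_of_succ_le (fun k ↦ (hf k).le) hmn (hv n)
  exact hv' m ((f (m + 1)).lower hle hmem)

section IsLowerAbove

variable {ι : Type*} [DecidableEq ι]

lemma exists_eq_add_single_one {v : ι → ℕ} {i : ι} (h : v i ≠ 0) :
    ∃ w : ι → ℕ, v = w + Pi.single i 1 := by
  refine ⟨Function.update v i (v i - 1), funext fun j ↦ ?_⟩
  rcases eq_or_ne j i with rfl | hj
  · simp [Nat.sub_add_cancel (Nat.one_le_iff_ne_zero.2 h)]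
  · simp [hj]

/-- `E` is downward closed in each direction `i` as long as the `i`-th coordinate does not drop
below the threshold `c i`. -/
def IsLowerAbove (c : ι → ℕ) (E : Set (ι → ℕ)) : Prop :=
  ∀ v i, v + Pi.single i 1 ∈ E → c i ≤ v i → v ∈ E

lemma IsLowerAbove.isLowerSet [Finite ι] {E : Set (ι → ℕ)} (hE : IsLowerAbove 0 E) :
    IsLowerSet E := by
  intro w v hvw hw
  induction w using WellFoundedLT.induction with | _ w ih
  rcases hvw.eq_or_lt with rfl | hlt
  · exact hw
  obtain ⟨i, hi⟩ := (Pi.lt_def.1 hlt).2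
  obtain ⟨u, rfl⟩ := exists_eq_add_single_one hi.ne_bot
  refine ih u (lt_add_of_pos_right u (by simp)) (fun j ↦ ?_) (hE u i hw (Nat.zero_le _))
  rcases eq_or_ne j i with rfl | hj
  · exact Nat.le_of_lt_succ (by simpa using hi)
  · simpa [hj] using hvw j

end IsLowerAbove

section LatticePoints

variable {ι : Type*} [Fintype ι]

/-- The number of points of `E` whose coordinates add up to `n`. -/
noncomputable def latticeCount (E : Set (ι → ℕ)) (n : ℕ) : ℕ :=
  {v ∈ E | ∑ i, v i = n}.ncard

/-- The generating function of the points of `E`, counted by the sum of their coordinates. -/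
noncomputable def latticeSeries (E : Set (ι → ℕ)) : PowerSeries ℚ :=
  PowerSeries.mk fun n ↦ (latticeCount E n : ℚ)

lemma finite_setOf_mem_and_sum_eq (E : Set (ι → ℕ)) (n : ℕ) : {v ∈ E | ∑ i, v i = n}.Finite := by
  classical
  exact (Finset.finite_toSet (Finset.piAntidiag Finset.univ n)).subset fun v hv ↦
    by simpa using hv.2

lemma latticeCount_eq_zero {E : Set (ι → ℕ)} {n : ℕ} (h : ∀ v ∈ E, ∑ i, v i ≠ n) :
    latticeCount E n = 0 := by
  rw [latticeCount, Set.ncard_eq_zero (finite_setOf_mem_and_sum_eq E n)]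
  exact Set.eq_empty_of_forall_notMem fun v hv ↦ h v hv.1 hv.2

lemma latticeCount_succ [DecidableEq ι] (E : Set (ι → ℕ)) (i : ι) (n : ℕ) :
    latticeCount E (n + 1) = latticeCount {v ∈ E | v i = 0} (n + 1) +
      latticeCount {v | v + Pi.single i 1 ∈ E} n := by
  have hsplit : {v ∈ E | ∑ j, v j = n + 1} = {v ∈ {v ∈ E | v i = 0} | ∑ j, v j = n + 1} ∪
      (· + Pi.single i 1) '' {v ∈ {v : ι → ℕ | v + Pi.single i 1 ∈ E} | ∑ j, v j = n} := by
    ext v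
    constructor
    · rintro ⟨hv, hsum⟩
      rcases eq_or_ne (v i) 0 with h0 | h0
      · exact .inl ⟨⟨hv, h0⟩, hsum⟩
      · obtain ⟨w, rfl⟩ := exists_eq_add_single_one h0
        exact .inr ⟨w, ⟨hv, by simpa [Finset.sum_add_distrib] using hsum⟩, rfl⟩
    · rintro (⟨⟨hv, -⟩, hsum⟩ | ⟨w, ⟨hw, hsum⟩, rfl⟩)
      · exact ⟨hv, hsum⟩
      · exact ⟨hw, by simp [Finset.sum_add_distrib, hsum]⟩
  rw [latticeCount, hsplit, Set.ncard_union_eq ?_ (finite_setOf_mem_and_sum_eq _ _)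
    ((finite_setOf_mem_and_sum_eq _ _).image _),
    Set.ncard_image_of_injective _ (add_left_injective _)]
  · rfl
  · refine Set.disjoint_left.2 ?_
    rintro _ ⟨⟨-, h0⟩, -⟩ ⟨w, -, rfl⟩
    simp at h0

lemma latticeSeries_eq_add_X_mul [DecidableEq ι] (E : Set (ι → ℕ)) (i : ι) :
    latticeSeries E = latticeSeries {v ∈ E | v i = 0} +
      PowerSeries.X * latticeSeries {v | v + Pi.single i 1 ∈ E} := by
  ext n
  cases n with
  | zero =>
    have : {v ∈ E | ∑ j, v j = 0} = {v ∈ {v ∈ E | v i = 0} | ∑ j, v j = 0} := by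
      ext v
      simp +contextual
    rw [latticeSeries, PowerSeries.coeff_mk, latticeCount, this]
    simp [latticeSeries, latticeCount]
  | succ n => simp [latticeSeries, PowerSeries.coeff_succ_X_mul, latticeCount_succ E i]

lemma hasPoleOnlyAtOne_latticeSeries_of_subset_zero {E : Set (ι → ℕ)} (h : E ⊆ {0}) :
    HasPoleOnlyAtOne (latticeSeries E) := by
  refine ⟨0, Polynomial.C (latticeCount E 0 : ℚ), ?_⟩
  ext n
  cases n with
  | zero => simp [latticeSeries]
  | succ n =>
    have : latticeCount E (n + 1) = 0 := latticeCount_eq_zero fun v hv ↦ by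
      rw [h hv]
      simp
    simp [latticeSeries, this]

lemma hasPoleOnlyAtOne_latticeSeries_lowerSet (E : LowerSet (ι → ℕ)) :
    HasPoleOnlyAtOne (latticeSeries (E : Set (ι → ℕ))) := by
  classical
  induction E using WellFoundedLT.induction with | _ E ih
  replace ih {F : Set (ι → ℕ)} (hF : IsLowerSet F) (hlt : F ⊂ E) :
      HasPoleOnlyAtOne (latticeSeries F) := ih ⟨F, hF⟩ hlt
  by_cases hE : (E : Set (ι → ℕ)) ⊆ {0}
  · exact hasPoleOnlyAtOne_latticeSeries_of_subset_zero hE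
  obtain ⟨v, hv, i, hi⟩ : ∃ v ∈ E, ∃ i, v i ≠ 0 := by
    obtain ⟨v, hv, hv0⟩ := Set.not_subset.1 hE
    exact ⟨v, hv, Function.ne_iff.1 hv0⟩
  have hpole₀ : HasPoleOnlyAtOne (latticeSeries {v ∈ (E : Set (ι → ℕ)) | v i = 0}) :=
    ih (fun v w hwv hv ↦ ⟨E.lower hwv hv.1, Nat.le_zero.1 ((hwv i).trans_eq hv.2)⟩)
      ((Set.ssubset_iff_of_subset fun w hw ↦ hw.1).2 ⟨v, hv, fun h ↦ hi h.2⟩)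
  have hlow₁ : IsLowerSet {v | v + Pi.single i 1 ∈ (E : Set (ι → ℕ))} := fun v w hwv hv ↦
    E.lower (add_le_add_left hwv _) hv
  have hle₁ : {v | v + Pi.single i 1 ∈ (E : Set (ι → ℕ))} ⊆ E := fun w hw ↦
    E.lower (le_add_of_nonneg_right zero_le) hw
  have hrec := latticeSeries_eq_add_X_mul (E : Set (ι → ℕ)) i
  rcases hle₁.eq_or_ssubset with heq | hlt₁
  · rw [heq] at hrec
    refine .of_mul_one_sub_X (Eq.subst ?_ hpole₀)
    linear_combination -hrec
  · rw [hrec]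
    exact hpole₀.add (ih hlow₁ hlt₁).X_mul

lemma IsLowerAbove.hasPoleOnlyAtOne [DecidableEq ι] {c : ι → ℕ} {E : Set (ι → ℕ)}
    (hE : IsLowerAbove c E) : HasPoleOnlyAtOne (latticeSeries E) := by
  induction c using WellFoundedLT.induction generalizing E with | _ c ih
  rcases eq_or_ne c 0 with rfl | hc
  · exact hasPoleOnlyAtOne_latticeSeries_lowerSet ⟨E, hE.isLowerSet⟩
  obtain ⟨i, hi⟩ := Function.ne_iff.1 hc
  obtain ⟨m, hm⟩ := Nat.exists_eq_succ_of_ne_zero hi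
  have hlt : ∀ k ≤ m, Function.update c i k < c := fun k hk ↦ update_lt_self_iff.2 (by lia)
  rw [latticeSeries_eq_add_X_mul E i]
  refine (ih _ (hlt 0 m.zero_le) ?_).add (ih _ (hlt m le_rfl) ?_).X_mul
  · rintro v j ⟨hv, hvi⟩ hj
    rcases eq_or_ne j i with rfl | hji
    · simp at hvi
    · rw [Function.update_of_ne hji] at hj
      exact ⟨hE v j hv hj, by simpa [hji] using hvi⟩
  · intro v j hv hj
    refine hE (v + Pi.single i 1) j (by rwa [add_right_comm]) ?_
    rcases eq_or_ne j i with rfl | hji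
    · simp_all
    · simpa [hji] using hj

end LatticePoints

section FibonacciGrowth

open Filter Asymptotics

lemma isLittleO_eval_pow_of_one_lt (p : Polynomial ℝ) {r : ℝ} (hr : 1 < r) :
    (fun n : ℕ ↦ p.eval (n : ℝ)) =o[atTop] fun n ↦ r ^ n := by
  simp_rw [Polynomial.eval_eq_sum_range]
  exact IsLittleO.fun_sum fun i _ ↦
    (isLittleO_pow_const_const_pow_of_one_lt i hr).const_mul_left _

lemma fib_succ_le_two_pow (n : ℕ) : Nat.fib (n + 1) ≤ 2 ^ n := by
  induction n with
  | zero => simp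
  | succ n ih =>
    have := Nat.fib_le_fib_succ (n := n)
    rw [Nat.fib_add_two, pow_succ]
    lia

lemma two_pow_le_fib_two_mul_add_one (n : ℕ) : 2 ^ n ≤ Nat.fib (2 * n + 1) := by
  induction n with
  | zero => simp
  | succ n ih =>
    have := Nat.fib_le_fib_succ (n := 2 * n + 1)
    rw [show 2 * (n + 1) + 1 = 2 * n + 1 + 2 by ring, Nat.fib_add_two, pow_succ]
    lia

lemma not_eventually_fib_le_eval (p : Polynomial ℚ) :
    ¬∀ᶠ n : ℕ in atTop, (Nat.fib n : ℚ) ≤ p.eval (n : ℚ) := by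
  intro h
  let q : Polynomial ℝ := (p.map (algebraMap ℚ ℝ)).comp (2 * Polynomial.X + 1)
  have hq (n : ℕ) : q.eval (n : ℝ) = ((p.eval ((2 * n + 1 : ℕ) : ℚ) : ℚ) : ℝ) := by
    rw [← eq_ratCast (algebraMap ℚ ℝ), ← Polynomial.eval_map_apply]
    simp [q, Polynomial.eval_comp]
  have hodd : Tendsto (fun n : ℕ ↦ 2 * n + 1) atTop atTop :=
    tendsto_atTop_mono (fun n ↦ (by lia : n ≤ 2 * n + 1)) tendsto_id
  have hpow : ∀ᶠ n : ℕ in atTop, (2 : ℝ) ^ n ≤ q.eval (n : ℝ) := by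
    filter_upwards [hodd.eventually h] with n hn
    rw [hq]
    exact_mod_cast (Nat.cast_le.2 (two_pow_le_fib_two_mul_add_one n)).trans hn
  have hsmall := (isLittleO_eval_pow_of_one_lt q one_lt_two).bound one_half_pos
  obtain ⟨n, hn, hn'⟩ := (hpow.and hsmall).exists
  have hpos : (0 : ℝ) < 2 ^ n := by positivity
  rw [Real.norm_of_nonneg (hpos.le.trans hn), Real.norm_of_nonneg hpos.le] at hn'
  linarith

end FibonacciGrowth

section Mirsky

variable {ι : Type*}

lemma exists_chain_or_antichain (R : ι → ι → Prop) [IsTrans ι R] (r s : ℕ) (J : Finset ι)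
    (hJ : r * s < J.card) :
    (∃ e : Fin (r + 1) → ι, (∀ i, e i ∈ J) ∧ ∀ i j, i < j → R (e i) (e j)) ∨
      ∃ A ⊆ J, A.card = s + 1 ∧ ∀ a ∈ A, ∀ b ∈ A, ¬R a b := by
  classical
  induction r generalizing J with
  | zero =>
    obtain ⟨a, ha⟩ := Finset.card_pos.1 (by lia : 0 < J.card)
    exact .inl ⟨fun _ ↦ a, fun _ ↦ ha, fun i j hij ↦ by lia⟩
  | succ r ih =>
    let M := {a ∈ J | ∀ b ∈ J, ¬R b a}
    rcases lt_or_ge s M.card with hM | hM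
    · obtain ⟨A, hAM, hA⟩ := Finset.exists_subset_card_eq (Nat.succ_le_of_lt hM)
      have hAJ : A ⊆ J := hAM.trans (Finset.filter_subset _ _)
      exact .inr ⟨A, hAJ, hA, fun a ha b hb ↦ (Finset.mem_filter.1 (hAM hb)).2 a (hAJ ha)⟩
    · have hcard := Finset.card_sdiff_add_card_eq_card (Finset.filter_subset _ _ : M ⊆ J)
      rcases ih (J \ M) (by lia) with ⟨e, heJ, he⟩ | ⟨A, hA, h⟩
      · obtain ⟨hJ₀, hM₀⟩ := Finset.mem_sdiff.1 (heJ 0)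
        obtain ⟨b, hb, hRb⟩ : ∃ b ∈ J, R b (e 0) := by simpa [M, hJ₀] using hM₀
        have hRe (i : Fin (r + 1)) : R b (e i) := by
          rcases (Fin.zero_le i).eq_or_lt with rfl | hi
          · exact hRb
          · exact _root_.trans hRb (he 0 i hi)
        refine .inl ⟨Fin.cons b e, Fin.cases hb fun i ↦ (Finset.mem_sdiff.1 (heJ i)).1, ?_⟩
        refine Fin.cases (Fin.cases (by simp) fun j _ ↦ hRe j) fun i ↦ Fin.cases (by simp) ?_
        exact fun j hij ↦ he i j (Fin.succ_lt_succ_iff.1 hij)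
      · exact .inr ⟨A, hA.trans Finset.sdiff_subset, h⟩

-- An antichain of intervals pairwise intersects; the largest left endpoint lies in all of them.
lemma exists_disjoint_chain_or_common_point {α : Type*} [LinearOrder α] {lo hi : ι → α}
    (hle : ∀ i, lo i ≤ hi i) (r s : ℕ) (J : Finset ι) (hJ : r * s < J.card) :
    (∃ e : Fin (r + 1) → ι, (∀ i, e i ∈ J) ∧ ∀ i j, i < j → hi (e i) < lo (e j)) ∨
      ∃ A ⊆ J, A.card = s + 1 ∧ ∃ x, ∀ a ∈ A, x ∈ Set.Icc (lo a) (hi a) := by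
  have htrans : IsTrans ι fun i j ↦ hi i < lo j := ⟨fun i j k h h' ↦ h.trans ((hle j).trans_lt h')⟩
  refine (exists_chain_or_antichain (fun i j ↦ hi i < lo j) r s J hJ).imp_right ?_
  rintro ⟨A, hAJ, hA, hanti⟩
  obtain ⟨c, hc, hmax⟩ := Finset.exists_max_image A lo (Finset.card_pos.1 (by lia))
  exact ⟨A, hAJ, hA, lo c, fun a ha ↦ ⟨hmax a ha, not_lt.1 (hanti a ha c hc)⟩⟩

end Mirsky

section Patterns

open Pointwise

lemma exists_perm_lt_iff_lt {n : ℕ} {α : Type*} [LinearOrder α] {g : Fin n → α}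
    (hg : Function.Injective g) : ∃ σ : Equiv.Perm (Fin n), ∀ i j, σ i < σ j ↔ g i < g j := by
  have hmono : StrictMono (g ∘ Tuple.sort g) :=
    (Tuple.monotone_sort g).strictMono_of_injective (hg.comp (Tuple.sort g).injective)
  exact ⟨(Tuple.sort g)⁻¹, fun i j ↦ by simp [← hmono.lt_iff_lt]⟩

lemma perm_ext_lt {n : ℕ} {σ τ : Equiv.Perm (Fin n)} (h : ∀ i j, σ i < σ j ↔ τ i < τ j) :
    σ = τ := by
  have hmono : StrictMono (τ * σ⁻¹) := fun i j hij ↦ (h _ _).1 (by simpa using hij)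
  have hid : ⇑(τ * σ⁻¹) = id :=
    StrictMono.range_inj hmono strictMono_id |>.1 (by simp)
  exact (mul_inv_eq_one.1 (Equiv.ext (congrFun hid))).symm

lemma PermContains.inv {k n : ℕ} {σ : Equiv.Perm (Fin k)} {π : Equiv.Perm (Fin n)}
    (h : PermContains σ π) : PermContains σ⁻¹ π⁻¹ := by
  obtain ⟨f, hf, hσ⟩ := h
  exact ⟨fun i ↦ π (f (σ⁻¹ i)), fun i j hij ↦ (hσ _ _).1 (by simpa using hij), fun i j ↦ by
    simp [hf.lt_iff_lt]⟩

lemma PermContains.revPerm_mul {k n : ℕ} {σ : Equiv.Perm (Fin k)} {π : Equiv.Perm (Fin n)}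
    (h : PermContains σ π) : PermContains (Fin.revPerm * σ) (Fin.revPerm * π) := by
  obtain ⟨f, hf, hσ⟩ := h
  exact ⟨f, hf, fun i j ↦ by simp [hσ]⟩

namespace IsPermClass

variable {C : ∀ n : ℕ, Set (Equiv.Perm (Fin n))}

lemma inv (hC : IsPermClass C) : IsPermClass fun n ↦ (C n)⁻¹ :=
  fun _ _ _ _ hπ h ↦ hC _ _ _ _ hπ h.inv

lemma revPerm_mul (hC : IsPermClass C) :
    IsPermClass fun n ↦ {π : Equiv.Perm (Fin n) | Fin.revPerm * π ∈ C n} :=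
  fun _ _ _ _ hπ h ↦ hC _ _ _ _ hπ h.revPerm_mul

lemma card_le_card_of_selections (hC : IsPermClass C) {N n : ℕ} {π : Equiv.Perm (Fin N)}
    (hπ : π ∈ C N) {ι : Type*} (S : Finset ι) (f : ι → Fin n → Fin N)
    (hf : ∀ s ∈ S, StrictMono (f s))
    (hinj : ∀ s ∈ S, ∀ t ∈ S,
      (∀ i j, π (f s i) < π (f s j) ↔ π (f t i) < π (f t j)) → s = t) :
    S.card ≤ Nat.card (C n) := by
  choose σ hσ using fun s : S ↦
    exists_perm_lt_iff_lt (π.injective.comp (hf s s.2).injective)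
  refine (Nat.card_eq_finsetCard S).symm.trans_le <| Nat.card_le_card_of_injective
    (fun s ↦ (⟨σ s, hC n N _ _ hπ ⟨f s, hf s s.2, hσ s⟩⟩ : C n)) fun s t hst ↦ ?_
  refine Subtype.ext (hinj s s.2 t t.2 fun i j ↦ ?_)
  rw [Subtype.mk.injEq] at hst
  exact (hσ s i j).symm.trans (hst ▸ hσ t i j)

end IsPermClass

end Patterns

section Crossing

variable {N n : ℕ}

lemma exists_slot {lo hi : Fin (n + 1) → Fin N} (hlohi : ∀ i j, i < j → hi i < lo j)
    (z : Fin N) : ∃ k, (∀ i < k, hi i < z) ∧ ∀ i > k, z < lo i := by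
  by_cases h : ∃ i, lo i ≤ z
  · obtain ⟨k, hk, hmax⟩ := Finset.exists_max_image {i | lo i ≤ z} id
      (by simpa [Finset.Nonempty] using h)
    rw [Finset.mem_filter_univ] at hk
    refine ⟨k, fun i hi ↦ (hlohi i k hi).trans_le hk, fun i hi ↦ not_le.1 fun hle ↦ ?_⟩
    exact hi.not_ge (hmax i (by simpa using hle))
  · push Not at h
    exact ⟨0, fun i hi ↦ absurd hi (Fin.not_lt_zero i), fun i _ ↦ h i⟩

lemma strictMono_update_of_slot {lo hi c : Fin (n + 1) → Fin N}
    (hlohi : ∀ i j, i < j → hi i < lo j) (hc : ∀ i, c i ∈ Set.Icc (lo i) (hi i))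
    {z : Fin N} {k : Fin (n + 1)} (hlt : ∀ i < k, hi i < z) (hgt : ∀ i > k, z < lo i) :
    StrictMono (Function.update c k z) := by
  intro i j hij
  by_cases hi : i = k <;> by_cases hj : j = k
  · lia
  · subst hi
    simpa [hj] using (hgt j hij).trans_le (hc j).1
  · subst hj
    simpa [hi] using (hc i).2.trans_lt (hlt i hij)
  · simpa [hi, hj] using (hc i).2.trans_lt ((hlohi i j hij).trans_le (hc j).1)

namespace IsPermClass

variable {C : ∀ n : ℕ, Set (Equiv.Perm (Fin n))} {π : Equiv.Perm (Fin N)}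

-- The point `z` serves as a reference height: every other interval offers a point below it and
-- a point above it, and these choices are independent.
lemma two_pow_le_card_of_crossing (hC : IsPermClass C) (hπ : π ∈ C N)
    {lo hi : Fin (n + 1) → Fin N} (hlohi : ∀ i j, i < j → hi i < lo j) {z : Fin N}
    (hbelow : ∀ i, ∃ a ∈ Set.Icc (lo i) (hi i), π a ≤ π z)
    (habove : ∀ i, ∃ b ∈ Set.Icc (lo i) (hi i), π z ≤ π b) :
    2 ^ n ≤ Nat.card (C (n + 1)) := by
  obtain ⟨k, hlt, hgt⟩ := exists_slot hlohi z
  choose a ha haz using hbelow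
  choose b hb hbz using habove
  let sel (S : Finset (Fin (n + 1))) : Fin (n + 1) → Fin N :=
    Function.update (fun i ↦ if i ∈ S then b i else a i) k z
  have hsel (S : Finset (Fin (n + 1))) : StrictMono (sel S) :=
    strictMono_update_of_slot hlohi (fun i ↦ by split_ifs; exacts [hb i, ha i]) hlt hgt
  have hk (S : Finset (Fin (n + 1))) : sel S k = z := Function.update_self ..
  have hmem (S : Finset (Fin (n + 1))) {i} (hik : i ≠ k) : i ∈ S ↔ π (sel S k) < π (sel S i) := by
    have hne : π (sel S k) ≠ π (sel S i) := fun h ↦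
      hik ((hsel S).injective (π.injective h)).symm
    have hi : sel S i = if i ∈ S then b i else a i := Function.update_of_ne hik ..
    rw [hk] at hne ⊢
    by_cases hiS : i ∈ S
    · rw [if_pos hiS] at hi
      simpa [hiS] using (hi ▸ hbz i).lt_of_ne hne
    · rw [if_neg hiS] at hi
      simpa [hiS] using hi ▸ haz i
  calc 2 ^ n = ((Finset.univ.erase k).powerset).card := by simp
    _ ≤ Nat.card (C (n + 1)) := by
      refine hC.card_le_card_of_selections hπ _ sel (fun S _ ↦ hsel S) fun S hS T hT h ↦ ?_
      rw [Finset.mem_powerset] at hS hT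
      ext i
      by_cases hik : i = k
      · subst hik
        exact iff_of_false (fun hi ↦ by simpa using hS hi) (fun hi ↦ by simpa using hT hi)
      · rw [hmem S hik, hmem T hik, h]

-- Sorting the steps by position, the ones with even index do not overlap.
lemma card_le_of_covBy_crossing (hC : IsPermClass C) (hπ : π ∈ C N)
    (hcard : Nat.card (C (n + 1)) < 2 ^ n) {z : Fin N} {A : Finset (Fin N)}
    (hA : ∀ x ∈ A, ∃ y, x ⋖ y ∧ π z ∈ Set.uIcc (π x) (π y)) : A.card ≤ 2 * n := by
  by_contra! hlt
  obtain ⟨B, hBA, hB⟩ := Finset.exists_subset_card_eq (Nat.succ_le_of_lt hlt)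
  let x (i : Fin (n + 1)) : Fin N := B.orderEmbOfFin hB ⟨2 * i, by lia⟩
  choose y hxy hz using fun i ↦ hA (x i) (hBA (B.orderEmbOfFin_mem hB _))
  refine hcard.not_ge (hC.two_pow_le_card_of_crossing hπ (lo := x) (hi := y) (z := z)
    (fun i j hij ↦ ?_) (fun i ↦ ?_) fun i ↦ ?_)
  · let w : Fin N := B.orderEmbOfFin hB ⟨2 * i + 1, by lia⟩
    have hxw : x i < w := (B.orderEmbOfFin hB).strictMono (by simp [Fin.lt_def])
    have hwx : w < x j := (B.orderEmbOfFin hB).strictMono (by simp [Fin.lt_def]; lia)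
    exact ((hxy i).ge_of_gt hxw).trans_lt hwx
  · obtain h | h := Set.mem_uIcc.1 (hz i)
    · exact ⟨x i, Set.left_mem_Icc.2 (hxy i).le, h.1⟩
    · exact ⟨y i, Set.right_mem_Icc.2 (hxy i).le, h.1⟩
  · obtain h | h := Set.mem_uIcc.1 (hz i)
    · exact ⟨y i, Set.right_mem_Icc.2 (hxy i).le, h.2⟩
    · exact ⟨x i, Set.left_mem_Icc.2 (hxy i).le, h.2⟩

end IsPermClass

end Crossing

section FibonacciPatterns

/-- The subsets of `{0, …, m - 1}` without two consecutive elements; each encodes the set of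
blocks of size two in a sum of permutations `1` and `21` of length `m + 1`. -/
def ncSets (m : ℕ) : Finset (Finset ℕ) := {T ∈ (Finset.range m).powerset | ∀ i ∈ T, i + 1 ∉ T}

lemma mem_ncSets {m : ℕ} {T : Finset ℕ} :
    T ∈ ncSets m ↔ (∀ i ∈ T, i < m) ∧ ∀ i ∈ T, i + 1 ∉ T := by
  simp [ncSets, Finset.subset_iff]

lemma ncSets_add_two (m : ℕ) :
    ncSets (m + 2) = ncSets (m + 1) ∪ (ncSets m).image (insert (m + 1)) := by
  ext T
  simp only [Finset.mem_union, Finset.mem_image, mem_ncSets]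
  refine ⟨fun ⟨hT, hnc⟩ ↦ ?_, ?_⟩
  · by_cases hm : m + 1 ∈ T
    · refine .inr ⟨T.erase (m + 1), ⟨fun i hi ↦ ?_, fun i hi ↦ ?_⟩, Finset.insert_erase hm⟩
      · obtain ⟨hne, hi⟩ := Finset.mem_erase.1 hi
        have := hT i hi
        have : i ≠ m := fun h ↦ hnc i hi (h ▸ hm)
        lia
      · exact fun h ↦ hnc i (Finset.mem_of_mem_erase hi) (Finset.mem_of_mem_erase h)
    · refine .inl ⟨fun i hi ↦ ?_, hnc⟩
      have := hT i hi
      have : i ≠ m + 1 := fun h ↦ hm (h ▸ hi)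
      lia
  · rintro (⟨hT, hnc⟩ | ⟨T, ⟨hT, hnc⟩, rfl⟩)
    · exact ⟨fun i hi ↦ (hT i hi).trans (by lia), hnc⟩
    · grind

lemma card_ncSets (m : ℕ) : (ncSets m).card = Nat.fib (m + 2) := by
  induction m using Nat.twoStepInduction with
  | zero => decide
  | one => decide
  | more m ih₀ ih₁ =>
    have hnotMem {T} (hT : T ∈ ncSets m) : m + 1 ∉ T := fun h ↦ by
      simpa using (mem_ncSets.1 hT).1 _ h
    rw [ncSets_add_two, Finset.card_union_of_disjoint, Finset.card_image_of_injOn, ih₀, ih₁,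
      Nat.fib_add_two (n := m + 2), add_comm]
    · intro T hT U hU h
      rw [← Finset.erase_insert (hnotMem hT), h, Finset.erase_insert (hnotMem hU)]
    · refine Finset.disjoint_left.2 fun T hT h ↦ ?_
      obtain ⟨U, -, rfl⟩ := Finset.mem_image.1 h
      simpa using (mem_ncSets.1 hT).1 _ (Finset.mem_insert_self _ _)

namespace IsPermClass

variable {C : ∀ n : ℕ, Set (Equiv.Perm (Fin n))} {N n : ℕ} {π : Equiv.Perm (Fin N)}

-- Position `i` takes the point `a i`, except that the element `i` of a set without consecutive
-- elements turns positions `i` and `i + 1` into the descent `a i`, `b i`.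
lemma fib_le_card_of_descents (hC : IsPermClass C) (hπ : π ∈ C N) {a b : Fin n → Fin N}
    (hab : ∀ k, a k < b k) (hba : ∀ k l, k < l → b k < a l)
    (hdesc : ∀ k, π (b k) < π (a k)) (hasc : ∀ k l, k < l → π (a k) < π (b l)) :
    Nat.fib n ≤ Nat.card (C n) := by
  obtain _ | m := n
  · simp
  let sel (T : Finset ℕ) : Fin (m + 1) → Fin N :=
    Fin.cons (a 0) fun i ↦ if (i : ℕ) ∈ T then b i.castSucc else a i.succ
  have hsucc (T : Finset ℕ) (i : Fin m) :
      sel T i.succ = if (i : ℕ) ∈ T then b i.castSucc else a i.succ := Fin.cons_succ ..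
  have hle (T : Finset ℕ) : ∀ i, sel T i ≤ a i ∧ π (sel T i) ≤ π (a i) := by
    refine Fin.cases ⟨le_rfl, le_rfl⟩ fun i ↦ ?_
    have hi : i.castSucc < i.succ := Fin.castSucc_lt_succ
    rw [hsucc]
    split_ifs
    · exact ⟨(hba _ _ hi).le, ((hdesc _).trans ((hasc _ _ hi).trans (hdesc _))).le⟩
    · exact ⟨le_rfl, le_rfl⟩
  have hsel (T : Finset ℕ) : StrictMono (sel T) := by
    refine Fin.strictMono_iff_lt_succ.2 fun i ↦ (hle T _).1.trans_lt ((hab _).trans_le ?_)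
    rw [hsucc]
    split_ifs
    exacts [le_rfl, (hba _ _ Fin.castSucc_lt_succ).le]
  have hmem {T : Finset ℕ} (hT : T ∈ ncSets m) (i : Fin m) :
      (i : ℕ) ∈ T ↔ π (sel T i.succ) < π (sel T i.castSucc) := by
    rw [hsucc]
    split_ifs with hi
    · refine iff_of_true hi ?_
      have hprev : sel T i.castSucc = a i.castSucc := by
        obtain h₀ | ⟨j, hj⟩ := i.castSucc.eq_zero_or_eq_succ
        · rw [h₀]; rfl
        · have hij : (i : ℕ) = j + 1 := congrArg Fin.val hj
          rw [hj, hsucc, if_neg fun h ↦ (mem_ncSets.1 hT).2 j h (hij ▸ hi)]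
      exact hprev ▸ hdesc _
    · refine iff_of_false hi (((hle T _).2.trans_lt ?_).not_gt)
      exact (hasc _ _ Fin.castSucc_lt_succ).trans (hdesc _)
  calc Nat.fib (m + 1) ≤ (ncSets m).card := card_ncSets m ▸ Nat.fib_le_fib_succ
    _ ≤ Nat.card (C (m + 1)) := by
      refine hC.card_le_card_of_selections hπ _ sel (fun T _ ↦ hsel T) fun S hS T hT h ↦ ?_
      have hiff (i : Fin m) : (i : ℕ) ∈ S ↔ (i : ℕ) ∈ T := by rw [hmem hS, h, hmem hT]
      ext i
      exact ⟨fun hi ↦ (hiff ⟨i, (mem_ncSets.1 hS).1 i hi⟩).1 hi,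
        fun hi ↦ (hiff ⟨i, (mem_ncSets.1 hT).1 i hi⟩).2 hi⟩

lemma fib_le_card_of_ascents (hC : IsPermClass C) (hπ : π ∈ C N) {a b : Fin n → Fin N}
    (hab : ∀ k, a k < b k) (hba : ∀ k l, k < l → b k < a l)
    (hasc : ∀ k, π (a k) < π (b k)) (hdesc : ∀ k l, k < l → π (b l) < π (a k)) :
    Nat.fib n ≤ Nat.card (C n) := by
  have hrev : Fin.revPerm * (Fin.revPerm * π) = π := Equiv.ext fun _ ↦ Fin.rev_rev _
  refine (hC.revPerm_mul.fib_le_card_of_descents (π := Fin.revPerm * π) (by simpa [hrev])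
    hab hba (by simpa) (by simpa)).trans_eq ?_
  exact Nat.card_congr ((Equiv.mulLeft Fin.revPerm).subtypeEquiv fun _ ↦ Iff.rfl)

end IsPermClass

end FibonacciPatterns

section NonBonds

variable {N : ℕ} {π : Equiv.Perm (Fin N)}

open Classical in
/-- The positions `x` such that the values at `x` and at the next position are not consecutive,
that is, some other value lies strictly between them. -/
noncomputable def nonBonds (π : Equiv.Perm (Fin N)) : Finset (Fin N) :=
  {x | ∃ y w, x ⋖ y ∧ π w ∈ Set.uIoo (π x) (π y)}

lemma mem_nonBonds {x : Fin N} :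
    x ∈ nonBonds π ↔ ∃ y w, x ⋖ y ∧ π w ∈ Set.uIoo (π x) (π y) := by
  simp [nonBonds]

/-- Two neighbouring positions `fst`, `snd` together with a position `mid` whose value separates
theirs. These three points form one of the patterns `132`, `213`, `231` and `312`. -/
structure NonBond (π : Equiv.Perm (Fin N)) where
  /-- The left position of the pair. -/
  fst : Fin N
  /-- The right position of the pair. -/
  snd : Fin N
  /-- A position whose value separates those of the pair. -/
  mid : Fin N
  covBy : fst ⋖ snd
  apply_mid_mem : π mid ∈ Set.uIoo (π fst) (π snd)

namespace NonBond

/-- The leftmost position of the three points. -/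
def left (B : NonBond π) : Fin N := min B.fst B.mid

/-- The rightmost position of the three points. -/
def right (B : NonBond π) : Fin N := max B.snd B.mid

/-- The least value of the three points. -/
def bot (B : NonBond π) : Fin N := min (π B.fst) (π B.snd)

/-- The greatest value of the three points. -/
def top (B : NonBond π) : Fin N := max (π B.fst) (π B.snd)

variable (B : NonBond π)

lemma left_le_right : B.left ≤ B.right :=
  (min_le_left _ _).trans (B.covBy.le.trans (le_max_left _ _))

lemma bot_le_top : B.bot ≤ B.top := (min_le_left _ _).trans (le_max_left _ _)

lemma apply_left_mem : π B.left ∈ Set.Icc B.bot B.top := by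
  obtain h | h := min_choice B.fst B.mid
  · rw [left, h]
    exact Set.left_mem_uIcc
  · rw [left, h]
    exact Set.Ioo_subset_Icc_self B.apply_mid_mem

lemma apply_right_mem : π B.right ∈ Set.Icc B.bot B.top := by
  obtain h | h := max_choice B.snd B.mid
  · rw [right, h]
    exact Set.right_mem_uIcc
  · rw [right, h]
    exact Set.Ioo_subset_Icc_self B.apply_mid_mem

lemma mid_lt_fst_or_snd_lt_mid : B.mid < B.fst ∨ B.snd < B.mid := by
  have hne₁ : B.mid ≠ B.fst := fun h ↦ Set.left_notMem_uIoo (h ▸ B.apply_mid_mem)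
  have hne₂ : B.mid ≠ B.snd := fun h ↦ Set.right_notMem_uIoo (h ▸ B.apply_mid_mem)
  rcases hne₁.lt_or_gt with h | h
  exacts [.inl h, .inr ((B.covBy.ge_of_gt h).lt_of_ne' hne₂)]

lemma exists_descent : ∃ a b, B.left ≤ a ∧ a < b ∧ b ≤ B.right ∧
    B.bot ≤ π b ∧ π b < π a ∧ π a ≤ B.top := by
  have hmid := B.apply_mid_mem
  have hlt := B.covBy.lt
  have hcases := B.mid_lt_fst_or_snd_lt_mid
  simp only [left, right, bot, top, Set.uIoo, Set.mem_Ioo] at *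
  rcases le_or_gt (π B.snd) (π B.fst) with h | h
  · exact ⟨B.fst, B.snd, by grind⟩
  · rcases hcases with h' | h'
    · exact ⟨B.mid, B.fst, by grind⟩
    · exact ⟨B.snd, B.mid, by grind⟩

lemma exists_ascent : ∃ a b, B.left ≤ a ∧ a < b ∧ b ≤ B.right ∧
    B.bot ≤ π a ∧ π a < π b ∧ π b ≤ B.top := by
  have hmid := B.apply_mid_mem
  have hlt := B.covBy.lt
  have hcases := B.mid_lt_fst_or_snd_lt_mid
  simp only [left, right, bot, top, Set.uIoo, Set.mem_Ioo] at *
  rcases le_or_gt (π B.fst) (π B.snd) with h | h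
  · exact ⟨B.fst, B.snd, by grind⟩
  · rcases hcases with h' | h'
    · exact ⟨B.mid, B.fst, by grind⟩
    · exact ⟨B.snd, B.mid, by grind⟩

end NonBond

namespace IsPermClass

variable {C : ∀ n : ℕ, Set (Equiv.Perm (Fin n))} {n : ℕ}

lemma exists_value_chain (hC : IsPermClass C) (hπ : π ∈ C N)
    (hcard : Nat.card (C (n + 1)) < 2 ^ n) {r : ℕ} (hr : r * (2 * n) < (nonBonds π).card) :
    ∃ e : Fin (r + 1) → NonBond π, ∀ i j, i < j → (e i).top < (e j).bot := by
  have hex (x : nonBonds π) : ∃ B : NonBond π, B.fst = x := by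
    obtain ⟨y, w, hxy, hw⟩ := mem_nonBonds.1 x.2
    exact ⟨⟨x, y, w, hxy, hw⟩, rfl⟩
  choose B hB using hex
  obtain ⟨e, -, he⟩ | ⟨A, -, hA, v, hv⟩ := exists_disjoint_chain_or_common_point
    (fun x ↦ (B x).bot_le_top) r (2 * n) (nonBonds π).attach (by simpa)
  · exact ⟨fun i ↦ B (e i), he⟩
  · have hle := hC.card_le_of_covBy_crossing hπ hcard (z := π.symm v)
      (A := A.map (Function.Embedding.subtype _)) fun x hx ↦ ?_
    · rw [Finset.card_map] at hle
      lia
    · obtain ⟨x, hxA, rfl⟩ := Finset.mem_map.1 hx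
      rw [Function.Embedding.subtype_apply, ← hB x]
      exact ⟨(B x).snd, (B x).covBy, (π.apply_symm_apply v).symm ▸ hv x hxA⟩

lemma exists_position_chain (hC : IsPermClass C) (hπ : π ∈ C N)
    (hcard : Nat.card (C (n + 1)) < 2 ^ n) {r : ℕ} {e : Fin (r * n + 1) → NonBond π}
    (he : ∀ i j, i < j → (e i).top < (e j).bot) :
    ∃ f : Fin (r + 1) → Fin (r * n + 1), ∀ i j, i < j → (e (f i)).right < (e (f j)).left := by
  obtain ⟨f, -, hf⟩ | ⟨A, -, hA, z, hz⟩ := exists_disjoint_chain_or_common_point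
    (fun k ↦ (e k).left_le_right) r n Finset.univ (by simp)
  · exact ⟨f, hf⟩
  · let g := A.orderEmbOfFin hA
    have hg (i : Fin (n + 1)) := hz (g i) (A.orderEmbOfFin_mem hA i)
    have hpow := hC.inv.two_pow_le_card_of_crossing (π := π⁻¹) (Set.inv_mem_inv.2 hπ) (z := π z)
      (fun i j hij ↦ he (g i) (g j) (g.strictMono hij))
      (fun i ↦ ⟨_, (e (g i)).apply_left_mem, by simpa using (hg i).1⟩)
      (fun i ↦ ⟨_, (e (g i)).apply_right_mem, by simpa using (hg i).2⟩)
    rw [Set.natCard_inv] at hpow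
    exact absurd hpow hcard.not_ge

end IsPermClass

lemma exists_increasing_or_decreasing {α : Type*} [LinearOrder α] {r s : ℕ}
    {f : Fin (r * s + 1) → α} (hf : Function.Injective f) :
    (∃ g : Fin (r + 1) → Fin (r * s + 1), StrictMono g ∧ StrictMono (f ∘ g)) ∨
      ∃ g : Fin (s + 1) → Fin (r * s + 1), StrictMono g ∧ StrictAnti (f ∘ g) := by
  have htrans : IsTrans (Fin (r * s + 1)) fun i j ↦ i < j ∧ f i < f j :=
    ⟨fun i j k h h' ↦ ⟨h.1.trans h'.1, h.2.trans h'.2⟩⟩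
  obtain ⟨g, -, hg⟩ | ⟨A, -, hA, hanti⟩ :=
    exists_chain_or_antichain (fun i j ↦ i < j ∧ f i < f j) r s Finset.univ (by simp)
  · exact .inl ⟨g, fun i j hij ↦ (hg i j hij).1, fun i j hij ↦ (hg i j hij).2⟩
  · let g := A.orderEmbOfFin hA
    refine .inr ⟨g, g.strictMono, fun i j hij ↦ ?_⟩
    have hij' := g.strictMono hij
    refine (not_lt.1 fun h ↦ ?_).lt_of_ne fun h ↦ hij'.ne' (hf h)
    exact hanti _ (A.orderEmbOfFin_mem hA i) _ (A.orderEmbOfFin_mem hA j) ⟨hij', h⟩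

namespace IsPermClass

variable {C : ∀ n : ℕ, Set (Equiv.Perm (Fin n))} {n : ℕ}

lemma fib_le_card_of_increasing_nonBonds (hC : IsPermClass C) (hπ : π ∈ C N)
    {e : Fin n → NonBond π} (hpos : ∀ i j, i < j → (e i).right < (e j).left)
    (hval : ∀ i j, i < j → (e i).top < (e j).bot) : Nat.fib n ≤ Nat.card (C n) := by
  choose a b hla hab hbr hbot hdesc htop using fun i ↦ (e i).exists_descent
  exact hC.fib_le_card_of_descents hπ hab
    (fun k l h ↦ (hbr k).trans_lt ((hpos k l h).trans_le (hla l))) hdesc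
    fun k l h ↦ (htop k).trans_lt ((hval k l h).trans_le (hbot l))

lemma fib_le_card_of_decreasing_nonBonds (hC : IsPermClass C) (hπ : π ∈ C N)
    {e : Fin n → NonBond π} (hpos : ∀ i j, i < j → (e i).right < (e j).left)
    (hval : ∀ i j, i < j → (e j).top < (e i).bot) : Nat.fib n ≤ Nat.card (C n) := by
  choose a b hla hab hbr hbot hasc htop using fun i ↦ (e i).exists_ascent
  exact hC.fib_le_card_of_ascents hπ hab
    (fun k l h ↦ (hbr k).trans_lt ((hpos k l h).trans_le (hla l))) hasc
    fun k l h ↦ (htop l).trans_lt ((hval k l h).trans_le (hbot k))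

lemma card_nonBonds_le (hC : IsPermClass C) (hπ : π ∈ C N)
    (hcard : Nat.card (C (n + 1)) < Nat.fib (n + 1)) : (nonBonds π).card ≤ 2 * n ^ 4 := by
  by_contra! hlt
  have hpow := hcard.trans_le (fib_succ_le_two_pow n)
  obtain ⟨e, he⟩ := hC.exists_value_chain hπ hpow (r := n * n * n) (by linarith)
  obtain ⟨f, hf⟩ := hC.exists_position_chain hπ hpow he
  have hinj : Function.Injective f := Function.Injective.of_lt_imp_ne fun i j hij h ↦
    (hf i j hij).not_ge (h ▸ NonBond.left_le_right _)
  refine hcard.not_ge ?_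
  obtain ⟨g, hg, hfg⟩ | ⟨g, hg, hfg⟩ := exists_increasing_or_decreasing hinj
  · exact hC.fib_le_card_of_increasing_nonBonds hπ (fun i j h ↦ hf (g i) (g j) (hg h))
      fun i j h ↦ he _ _ (hfg h)
  · exact hC.fib_le_card_of_decreasing_nonBonds hπ (fun i j h ↦ hf (g i) (g j) (hg h))
      fun i j h ↦ he _ _ (hfg h)

end IsPermClass

end NonBonds

section Blocks

variable {N : ℕ} {π : Equiv.Perm (Fin N)}

/-- The index, counted from `0`, of the block containing the position `x`, where the non-bonds cut
the positions into blocks. On each block the values are consecutive and monotone. -/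
noncomputable def blockIndex (π : Equiv.Perm (Fin N)) (x : Fin N) : ℕ :=
  {z ∈ nonBonds π | z < x}.card

lemma blockIndex_mono : Monotone (blockIndex π) := fun _ _ hxy ↦
  Finset.card_le_card <| Finset.monotone_filter_right _ fun _ _ h ↦ h.trans_le hxy

lemma blockIndex_le_card (x : Fin N) : blockIndex π x ≤ (nonBonds π).card :=
  Finset.card_filter_le _ _

lemma notMem_nonBonds_of_blockIndex_eq {x y z : Fin N} (hxy : blockIndex π x = blockIndex π y)
    (hxz : x ≤ z) (hzy : z < y) : z ∉ nonBonds π := fun hz ↦ by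
  have hsub : {w ∈ nonBonds π | w < x} ⊂ {w ∈ nonBonds π | w < y} :=
    Finset.ssubset_iff_exists_cons_subset.2 ⟨z, by simp [hxz], fun w hw ↦ by
      simp only [Finset.mem_cons, Finset.mem_filter] at hw ⊢
      grind⟩
  exact (Finset.card_lt_card hsub).ne hxy

lemma apply_lt_apply_iff_of_notMem_nonBonds {x y u : Fin N} (hx : x ∉ nonBonds π) (hxy : x ⋖ y)
    (hux : u ≠ x) (huy : u ≠ y) : π u < π x ↔ π u < π y := by
  have hu : π u ∉ Set.uIoo (π x) (π y) := fun hu ↦ hx (mem_nonBonds.2 ⟨y, u, hxy, hu⟩)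
  have hne₁ : π u ≠ π x := π.injective.ne hux
  have hne₂ : π u ≠ π y := π.injective.ne huy
  simp only [Set.uIoo, Set.mem_Ioo] at hu
  grind

lemma apply_lt_apply_iff_of_blockIndex_eq_of_le {x y u : Fin N}
    (hxy : blockIndex π x = blockIndex π y) (hle : x ≤ y) (hu : u ∉ Set.Icc x y) :
    π u < π x ↔ π u < π y := by
  suffices h : ∀ z, x ≤ z → z ≤ y → (π u < π x ↔ π u < π z) from h y hle le_rfl
  refine fun z hxz ↦ Succ.rec (P := fun z _ ↦ z ≤ y → (π u < π x ↔ π u < π z)) (fun _ ↦ Iff.rfl)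
    (fun z hxz ih hzy ↦ ?_) hxz
  by_cases hmax : IsMax z
  · rw [hmax.succ_eq] at hzy ⊢
    exact ih hzy
  · have hcov := Order.covBy_succ_of_not_isMax hmax
    have hlt := hcov.lt.trans_le hzy
    refine (ih hlt.le).trans (apply_lt_apply_iff_of_notMem_nonBonds
      (notMem_nonBonds_of_blockIndex_eq hxy hxz hlt) hcov ?_ ?_)
    · rintro rfl
      exact hu ⟨hxz, hlt.le⟩
    · rintro rfl
      exact hu ⟨hxz.trans hcov.le, hzy⟩

lemma apply_lt_apply_iff_of_blockIndex_eq {x y u : Fin N}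
    (hxy : blockIndex π x = blockIndex π y) (hu : u ∉ Set.uIcc x y) :
    π u < π x ↔ π u < π y := by
  rcases le_total x y with h | h
  · exact apply_lt_apply_iff_of_blockIndex_eq_of_le hxy h (by rwa [Set.uIcc_of_le h] at hu)
  · exact (apply_lt_apply_iff_of_blockIndex_eq_of_le hxy.symm h
      (by rwa [Set.uIcc_of_ge h] at hu)).symm

lemma apply_gt_apply_iff_of_blockIndex_eq {x y u : Fin N}
    (hxy : blockIndex π x = blockIndex π y) (hu : u ∉ Set.uIcc x y) :
    π x < π u ↔ π y < π u := by
  have hne₁ : u ≠ x := fun h ↦ hu (h ▸ Set.left_mem_uIcc)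
  have hne₂ : u ≠ y := fun h ↦ hu (h ▸ Set.right_mem_uIcc)
  rw [← not_iff_not, not_lt, not_lt, (π.injective.ne hne₁).le_iff_lt,
    (π.injective.ne hne₂).le_iff_lt, apply_lt_apply_iff_of_blockIndex_eq hxy hu]

lemma notMem_uIcc_of_blockIndex_ne {x y u : Fin N} (hxy : blockIndex π x = blockIndex π y)
    (hu : blockIndex π u ≠ blockIndex π x) : u ∉ Set.uIcc x y := fun h ↦ by
  have := (blockIndex_mono (π := π)).mapsTo_uIcc h
  rw [← hxy, Set.uIcc_self] at this
  exact hu this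

-- Within one block, all pairs are compared with a position to the right of both.
lemma apply_lt_apply_iff_of_blockIndex_eq_pair {x y z w : Fin N}
    (hxz : blockIndex π x = blockIndex π z) (hyw : blockIndex π y = blockIndex π w)
    (hlt : blockIndex π x = blockIndex π y → x < y ∧ z < w) : π x < π y ↔ π z < π w := by
  by_cases hxy : blockIndex π x = blockIndex π y
  · obtain ⟨hxy', hzw⟩ := hlt hxy
    let m := max y w
    have hm : blockIndex π m = blockIndex π y := by grind
    have hxm : x < m := hxy'.trans_le (le_max_left _ _)
    have hzm : z < m := hzw.trans_le (le_max_right _ _)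
    calc π x < π y
      _ ↔ π x < π m :=
        apply_lt_apply_iff_of_blockIndex_eq hm.symm (Set.notMem_uIcc_of_lt hxy' hxm)
      _ ↔ π z < π m :=
        apply_gt_apply_iff_of_blockIndex_eq hxz (Set.notMem_uIcc_of_gt hxm hzm)
      _ ↔ π z < π w := apply_lt_apply_iff_of_blockIndex_eq (hm.trans hyw)
        (Set.notMem_uIcc_of_lt hzm hzw)
  · calc π x < π y
      _ ↔ π x < π w := apply_lt_apply_iff_of_blockIndex_eq hyw
        (notMem_uIcc_of_blockIndex_ne hyw hxy)
      _ ↔ π z < π w := apply_gt_apply_iff_of_blockIndex_eq hxz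
        (notMem_uIcc_of_blockIndex_ne hxz (hyw ▸ Ne.symm hxy))

end Blocks

section BlockData

variable {N K : ℕ}

/-- The lengths of the first `K` blocks. -/
noncomputable def blockLength (K : ℕ) (π : Equiv.Perm (Fin N)) (i : Fin K) : ℕ :=
  {x | blockIndex π x = i}.ncard

/-- How the values of the `i`-th and the `j`-th block compare; for `i = j` this says that the
block is increasing of length at least two. -/
def blockOrder (K : ℕ) (π : Equiv.Perm (Fin N)) (i j : Fin K) : Prop :=
  ∃ x y, blockIndex π x = i ∧ blockIndex π y = j ∧ (i = j → x < y) ∧ π x < π y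

variable {π : Equiv.Perm (Fin N)}

lemma blockOrder_iff {i j : Fin K} {x y : Fin N} (hx : blockIndex π x = i)
    (hy : blockIndex π y = j) (hxy : i = j → x < y) : blockOrder K π i j ↔ π x < π y := by
  refine ⟨fun ⟨z, w, hz, hw, hzw, h⟩ ↦ ?_, fun h ↦ ⟨x, y, hx, hy, hxy, h⟩⟩
  refine (apply_lt_apply_iff_of_blockIndex_eq_pair (hz.trans hx.symm) (hw.trans hy.symm)
    fun h ↦ ?_).1 h
  have hij : i = j := Fin.ext (hz.symm.trans (h.trans hw))
  exact ⟨hzw hij, hxy hij⟩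

lemma sum_blockLength (hK : ∀ x, blockIndex π x < K) : ∑ i, blockLength K π i = N := by
  have hfib := Finset.card_eq_sum_card_fiberwise (s := Finset.univ) (t := Finset.univ)
    (f := fun x ↦ (⟨blockIndex π x, hK x⟩ : Fin K)) fun _ _ ↦ Finset.mem_univ _
  rw [Finset.card_univ, Fintype.card_fin] at hfib
  simp [blockLength, Set.ncard_eq_toFinset_card', hfib, Fin.ext_iff]

lemma eq_of_monotone_of_card_fiber_eq {α : Type*} [LinearOrder α] {g h : Fin N → α}
    (hg : Monotone g) (hh : Monotone h)
    (hcard : ∀ a, Nat.card {x // g x = a} = Nat.card {x // h x = a}) : g = h := by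
  let σ : Equiv.Perm (Fin N) := Equiv.ofFiberEquiv fun a ↦ (Finite.card_eq.1 (hcard a)).some
  have hσ : h ∘ σ = g := funext fun x ↦ Equiv.ofFiberEquiv_map _ x
  rw [← hσ]
  exact Tuple.unique_monotone (τ := 1) (hσ ▸ hg) hh

lemma blockIndex_eq_of_blockLength_eq {σ : Equiv.Perm (Fin N)} (hπ : ∀ x, blockIndex π x < K)
    (hσ : ∀ x, blockIndex σ x < K) (h : blockLength K π = blockLength K σ) :
    blockIndex π = blockIndex σ := by
  refine eq_of_monotone_of_card_fiber_eq blockIndex_mono blockIndex_mono fun a ↦ ?_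
  rcases lt_or_ge a K with ha | ha
  · exact congrFun h ⟨a, ha⟩
  · have hπ' (x : Fin N) : blockIndex π x ≠ a := ((hπ x).trans_le ha).ne
    have hσ' (x : Fin N) : blockIndex σ x ≠ a := ((hσ x).trans_le ha).ne
    simp [hπ', hσ']

lemma eq_of_blockLength_eq_of_blockOrder_eq {σ : Equiv.Perm (Fin N)}
    (hπ : ∀ x, blockIndex π x < K) (hσ : ∀ x, blockIndex σ x < K)
    (hlen : blockLength K π = blockLength K σ) (hord : blockOrder K π = blockOrder K σ) :
    π = σ := by
  have hblk := blockIndex_eq_of_blockLength_eq hπ hσ hlen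
  have hlt {x y : Fin N} (hxy : x < y) : π x < π y ↔ σ x < σ y := by
    rw [← blockOrder_iff (i := ⟨_, hπ x⟩) (j := ⟨_, hπ y⟩) rfl rfl fun _ ↦ hxy, hord,
      blockOrder_iff (congrFun hblk x).symm (congrFun hblk y).symm fun _ ↦ hxy]
  refine perm_ext_lt fun x y ↦ ?_
  rcases lt_trichotomy x y with h | rfl | h
  · exact hlt h
  · simp
  · have hle := (hlt h).not
    rwa [not_lt, not_lt, (π.injective.ne h.ne').le_iff_lt, (σ.injective.ne h.ne').le_iff_lt]
      at hle

end BlockData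

section Deletion

variable {N K : ℕ} {σ : Equiv.Perm (Fin N)} {π : Equiv.Perm (Fin (N + 1))} {p : Fin (N + 1)}

/-- `σ` is obtained from `π` by deleting the position `p`, which is neither the first nor the last
position of its block. -/
structure IsInteriorDeletion (σ : Equiv.Perm (Fin N)) (π : Equiv.Perm (Fin (N + 1)))
    (p : Fin (N + 1)) : Prop where
  lt_iff : ∀ x y, σ x < σ y ↔ π (p.succAbove x) < π (p.succAbove y)
  exists_lt : ∃ a < p, blockIndex π a = blockIndex π p
  exists_gt : ∃ b, p < b ∧ blockIndex π b = blockIndex π p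

lemma exists_isInteriorDeletion {i : Fin K} (h : 2 < blockLength K π i) :
    ∃ p σ, blockIndex π p = i ∧ IsInteriorDeletion σ π p := by
  classical
  rw [blockLength, Set.ncard_eq_toFinset_card', Set.toFinset_ofPred] at h
  let e := Finset.orderEmbOfFin _ (rfl : _ = Finset.card {x | blockIndex π x = i})
  have he (k) : blockIndex π (e k) = i :=
    (Finset.mem_filter.1 (Finset.orderEmbOfFin_mem _ rfl k)).2
  let p := e ⟨1, by lia⟩
  obtain ⟨σ, hσ⟩ := exists_perm_lt_iff_lt (π.injective.comp (p.succAbove_right_injective))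
  exact ⟨p, σ, he _, hσ, ⟨e ⟨0, by lia⟩, e.strictMono (by simp [Fin.lt_def]),
    (he _).trans (he _).symm⟩, ⟨e ⟨2, h⟩, e.strictMono (by simp [Fin.lt_def]),
    (he _).trans (he _).symm⟩⟩

namespace IsInteriorDeletion

lemma permContains (h : IsInteriorDeletion σ π p) : PermContains σ π :=
  ⟨p.succAbove, p.strictMono_succAbove, h.lt_iff⟩

lemma exists_succAbove_le (h : IsInteriorDeletion σ π p) (x : Fin (N + 1)) :
    ∃ a, p.succAbove a ≤ x ∧ blockIndex π (p.succAbove a) = blockIndex π x := by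
  obtain ⟨x', hx'p, hle, heq⟩ : ∃ x' ≠ p, x' ≤ x ∧ blockIndex π x' = blockIndex π x := by
    obtain ⟨a, ha, hap⟩ := h.exists_lt
    grind
  obtain ⟨a, rfl⟩ := Fin.exists_succAbove_eq hx'p
  exact ⟨a, hle, heq⟩

lemma exists_le_succAbove (h : IsInteriorDeletion σ π p) (x : Fin (N + 1)) :
    ∃ b, x ≤ p.succAbove b ∧ blockIndex π (p.succAbove b) = blockIndex π x := by
  obtain ⟨x', hx'p, hle, heq⟩ : ∃ x' ≠ p, x ≤ x' ∧ blockIndex π x' = blockIndex π x := by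
    obtain ⟨b, hb, hbp⟩ := h.exists_gt
    grind
  obtain ⟨b, rfl⟩ := Fin.exists_succAbove_eq hx'p
  exact ⟨b, hle, heq⟩

lemma notMem_nonBonds (h : IsInteriorDeletion σ π p) : p ∉ nonBonds π :=
  let ⟨_, hb, hbp⟩ := h.exists_gt
  notMem_nonBonds_of_blockIndex_eq hbp.symm le_rfl hb

lemma mem_uIoo_iff (h : IsInteriorDeletion σ π p) {x y w : Fin N} :
    σ w ∈ Set.uIoo (σ x) (σ y) ↔
      π (p.succAbove w) ∈ Set.uIoo (π (p.succAbove x)) (π (p.succAbove y)) := by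
  simp only [Set.uIoo, Set.mem_Ioo, inf_lt_iff, lt_sup_iff, h.lt_iff]

lemma blockIndex_succAbove_eq_of_lt_of_lt (h : IsInteriorDeletion σ π p) {x y : Fin N}
    (hxy : x ⋖ y) (hx : p.succAbove x < p) (hy : p < p.succAbove y) :
    blockIndex π (p.succAbove x) = blockIndex π (p.succAbove y) := by
  have hmono := p.strictMono_succAbove
  obtain ⟨a, hap, ha⟩ := h.exists_succAbove_le p
  obtain ⟨b, hpb, hb⟩ := h.exists_le_succAbove p
  have hax : a ≤ x := hxy.le_of_lt <| hmono.lt_iff_lt.1 (hap.trans_lt hy)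
  have hyb : y ≤ b := hxy.ge_of_gt <| hmono.lt_iff_lt.1 (hx.trans_le hpb)
  refine (blockIndex_mono (hmono hxy.lt).le).antisymm ?_
  calc blockIndex π (p.succAbove y)
    _ ≤ blockIndex π (p.succAbove b) := blockIndex_mono (hmono.monotone hyb)
    _ = blockIndex π (p.succAbove a) := hb.trans ha.symm
    _ ≤ blockIndex π (p.succAbove x) := blockIndex_mono (hmono.monotone hax)

lemma succAbove_mem_nonBonds (h : IsInteriorDeletion σ π p) {x : Fin N} (hx : x ∈ nonBonds σ) :
    p.succAbove x ∈ nonBonds π := by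
  obtain ⟨y, w, hxy, hw⟩ := mem_nonBonds.1 hx
  rw [h.mem_uIoo_iff] at hw
  have hmono := p.strictMono_succAbove
  by_cases hcov : p.succAbove x ⋖ p.succAbove y
  · exact mem_nonBonds.2 ⟨_, _, hcov, hw⟩
  obtain ⟨c, hxc, hcy⟩ := exists_lt_lt_of_not_covBy (hmono hxy.lt) hcov
  obtain rfl : c = p := by
    by_contra hc
    obtain ⟨d, rfl⟩ := Fin.exists_succAbove_eq hc
    exact hxy.2 (hmono.lt_iff_lt.1 hxc) (hmono.lt_iff_lt.1 hcy)
  simp only [Set.uIoo, Set.mem_Ioo] at hw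
  have hw' : c.succAbove w ∉ Set.uIcc (c.succAbove x) (c.succAbove y) := by
    rw [Set.uIcc_of_le (hmono hxy.lt).le]
    rintro ⟨hxw, hwy⟩
    obtain rfl | rfl := hxy.eq_or_eq (hmono.le_iff_le.1 hxw) (hmono.le_iff_le.1 hwy) <;> grind
  have hiff := apply_lt_apply_iff_of_blockIndex_eq
    (h.blockIndex_succAbove_eq_of_lt_of_lt hxy hxc hcy) hw'
  grind

lemma exists_succAbove_eq_of_covBy (h : IsInteriorDeletion σ π p) {x : Fin N} {y : Fin (N + 1)}
    (hx : p.succAbove x ∈ nonBonds π) (hcov : p.succAbove x ⋖ y) :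
    ∃ z, p.succAbove z = y ∧ x ⋖ z := by
  have hmono := p.strictMono_succAbove
  have hy : y ≠ p := by
    rintro rfl
    obtain ⟨a, hay, ha⟩ := h.exists_succAbove_le y
    have hax : y.succAbove a ≤ y.succAbove x :=
      hcov.le_of_lt (hay.lt_of_ne (Fin.succAbove_ne _ _))
    have heq : blockIndex π (y.succAbove x) = blockIndex π y :=
      (blockIndex_mono hcov.le).antisymm (ha ▸ blockIndex_mono hax)
    exact notMem_nonBonds_of_blockIndex_eq heq le_rfl hcov.lt hx
  obtain ⟨z, rfl⟩ := Fin.exists_succAbove_eq hy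
  exact ⟨z, rfl, hmono.lt_iff_lt.1 hcov.lt, fun c hxc hcz ↦ hcov.2 (hmono hxc) (hmono hcz)⟩

lemma exists_apply_succAbove_mem_uIoo (h : IsInteriorDeletion σ π p) {x y : Fin N}
    (hcov : p.succAbove x ⋖ p.succAbove y)
    (hp : π p ∈ Set.uIoo (π (p.succAbove x)) (π (p.succAbove y))) :
    ∃ w, π (p.succAbove w) ∈ Set.uIoo (π (p.succAbove x)) (π (p.succAbove y)) := by
  obtain ⟨w, hw, hxw, hyw⟩ : ∃ w, blockIndex π (p.succAbove w) = blockIndex π p ∧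
      p.succAbove x ∉ Set.uIcc (p.succAbove w) p ∧ p.succAbove y ∉ Set.uIcc (p.succAbove w) p := by
    obtain ⟨a, hap, ha⟩ := h.exists_succAbove_le p
    obtain ⟨b, hpb, hb⟩ := h.exists_le_succAbove p
    rcases (Fin.succAbove_ne p x).lt_or_gt with hx | hx
    · have hy : p.succAbove y < p := (hcov.ge_of_gt hx).lt_of_ne (Fin.succAbove_ne _ _)
      exact ⟨b, hb, Set.notMem_uIcc_of_lt (hx.trans_le hpb) hx,
        Set.notMem_uIcc_of_lt (hy.trans_le hpb) hy⟩
    · have hy := hx.trans hcov.lt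
      exact ⟨a, ha, Set.notMem_uIcc_of_gt (hap.trans_lt hx) hx,
        Set.notMem_uIcc_of_gt (hap.trans_lt hy) hy⟩
  refine ⟨w, ?_⟩
  simp only [Set.uIoo, Set.mem_Ioo, inf_lt_iff, lt_sup_iff] at hp ⊢
  rwa [apply_lt_apply_iff_of_blockIndex_eq hw hxw, apply_lt_apply_iff_of_blockIndex_eq hw hyw,
    apply_gt_apply_iff_of_blockIndex_eq hw hxw, apply_gt_apply_iff_of_blockIndex_eq hw hyw]

lemma mem_nonBonds_of_succAbove_mem (h : IsInteriorDeletion σ π p) {x : Fin N}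
    (hx : p.succAbove x ∈ nonBonds π) : x ∈ nonBonds σ := by
  obtain ⟨y, w, hcov, hw⟩ := mem_nonBonds.1 hx
  obtain ⟨y, rfl, hxy⟩ := h.exists_succAbove_eq_of_covBy hx hcov
  obtain ⟨w, hw⟩ : ∃ w, π (p.succAbove w) ∈ Set.uIoo (π (p.succAbove x)) (π (p.succAbove y)) := by
    rcases eq_or_ne w p with rfl | hwp
    · exact h.exists_apply_succAbove_mem_uIoo hcov hw
    · obtain ⟨w, rfl⟩ := Fin.exists_succAbove_eq hwp
      exact ⟨w, hw⟩
  exact mem_nonBonds.2 ⟨y, w, hxy, h.mem_uIoo_iff.2 hw⟩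

lemma blockIndex_eq (h : IsInteriorDeletion σ π p) (x : Fin N) :
    blockIndex σ x = blockIndex π (p.succAbove x) := by
  rw [blockIndex, blockIndex, ← Finset.card_map p.succAboveEmb]
  congr 1
  ext z
  rcases eq_or_ne z p with rfl | hz
  · simp [h.notMem_nonBonds]
  · obtain ⟨z, rfl⟩ := Fin.exists_succAbove_eq hz
    have : p.succAbove z ∈ nonBonds π ↔ z ∈ nonBonds σ :=
      ⟨h.mem_nonBonds_of_succAbove_mem, h.succAbove_mem_nonBonds⟩
    simp [this]

lemma blockLength_eq (h : IsInteriorDeletion σ π p) {i : Fin K} (hi : blockIndex π p = i) :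
    blockLength K π = blockLength K σ + Pi.single i 1 := by
  ext j
  simp only [blockLength, Set.ncard_eq_toFinset_card', Set.toFinset_ofPred, Finset.card_filter,
    Fin.sum_univ_succAbove _ p, h.blockIndex_eq, Pi.add_apply, Pi.single_apply, hi]
  rw [add_comm]
  simp [Fin.ext_iff, eq_comm]

lemma blockOrder_eq (h : IsInteriorDeletion σ π p) : blockOrder K π = blockOrder K σ := by
  ext i j
  constructor
  · rintro ⟨x, y, hx, hy, hxy, hlt⟩
    obtain ⟨a, hax, ha⟩ := h.exists_succAbove_le x
    obtain ⟨b, hyb, hb⟩ := h.exists_le_succAbove y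
    have hab (hij : i = j) : p.succAbove a < p.succAbove b := hax.trans_lt (hxy hij |>.trans_le hyb)
    refine ⟨a, b, (h.blockIndex_eq a).trans (ha.trans hx), (h.blockIndex_eq b).trans (hb.trans hy),
      fun hij ↦ p.strictMono_succAbove.lt_iff_lt.1 (hab hij), ?_⟩
    rw [h.lt_iff, ← blockOrder_iff (ha.trans hx) (hb.trans hy) hab]
    exact ⟨x, y, hx, hy, hxy, hlt⟩
  · rintro ⟨a, b, ha, hb, hab, hlt⟩
    exact ⟨p.succAbove a, p.succAbove b, (h.blockIndex_eq a).symm.trans ha,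
      (h.blockIndex_eq b).symm.trans hb, fun hij ↦ p.strictMono_succAbove (hab hij),
      (h.lt_iff a b).1 hlt⟩

end IsInteriorDeletion

end Deletion

section Counting

variable {C : ∀ n : ℕ, Set (Equiv.Perm (Fin n))} {K : ℕ}

/-- The block length vectors of the permutations in `C` whose first `K` blocks are ordered
according to `r`. -/
def lengthVectors (C : ∀ n : ℕ, Set (Equiv.Perm (Fin n))) (r : Fin K → Fin K → Prop) :
    Set (Fin K → ℕ) :=
  {v | ∃ n, ∃ π ∈ C n, blockOrder K π = r ∧ blockLength K π = v}

lemma IsPermClass.isLowerAbove_lengthVectors (hC : IsPermClass C) (r : Fin K → Fin K → Prop) :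
    IsLowerAbove (fun _ ↦ 2) (lengthVectors C r) := by
  rintro v i ⟨n, π, hπ, hr, hv⟩ hi
  have hlen : 2 < blockLength K π i := by simpa [hv, Nat.lt_succ_iff] using hi
  obtain _ | N := n
  · simp [blockLength, Set.eq_empty_of_isEmpty] at hlen
  obtain ⟨p, σ, hp, hσ⟩ := exists_isInteriorDeletion hlen
  refine ⟨N, σ, hC _ _ _ _ hπ hσ.permContains, hσ.blockOrder_eq ▸ hr, ?_⟩
  exact add_right_cancel ((hσ.blockLength_eq hp).symm.trans hv)

lemma card_blockOrder_eq (hK : ∀ n, ∀ π ∈ C n, ∀ x, blockIndex π x < K)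
    (r : Fin K → Fin K → Prop) (n : ℕ) :
    {π ∈ C n | blockOrder K π = r}.ncard = latticeCount (lengthVectors C r) n := by
  have himage : blockLength K '' {π ∈ C n | blockOrder K π = r} =
      {v ∈ lengthVectors C r | ∑ i, v i = n} := by
    ext v
    constructor
    · rintro ⟨π, ⟨hπ, hr⟩, rfl⟩
      exact ⟨⟨n, π, hπ, hr, rfl⟩, sum_blockLength (hK n π hπ)⟩
    · rintro ⟨⟨m, π, hπ, hr, rfl⟩, hn⟩
      obtain rfl : m = n := (sum_blockLength (hK m π hπ)).symm.trans hn
      exact ⟨π, ⟨hπ, hr⟩, rfl⟩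
  rw [latticeCount, ← himage, Set.InjOn.ncard_image]
  exact fun π hπ σ hσ h ↦ eq_of_blockLength_eq_of_blockOrder_eq (hK n π hπ.1) (hK n σ hσ.1) h
    (hπ.2.trans hσ.2.symm)

lemma card_eq_sum_latticeCount (hK : ∀ n, ∀ π ∈ C n, ∀ x, blockIndex π x < K) (n : ℕ) :
    Nat.card (C n) = ∑ r : Fin K → Fin K → Prop, latticeCount (lengthVectors C r) n := by
  classical
  rw [Nat.card_coe_set_eq, Set.ncard_eq_toFinset_card',
    Finset.card_eq_sum_card_fiberwise (f := blockOrder K) (t := Finset.univ) (by simp)]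
  refine Finset.sum_congr rfl fun r _ ↦ ?_
  rw [← card_blockOrder_eq hK, ← Set.ncard_coe_finset]
  simp

lemma IsPermClass.exists_polynomial_card_eq (hC : IsPermClass C)
    (hK : ∀ n, ∀ π ∈ C n, ∀ x, blockIndex π x < K) :
    ∃ (p : Polynomial ℚ) (n₀ : ℕ), ∀ n, n₀ ≤ n → (Nat.card (C n) : ℚ) = p.eval (n : ℚ) := by
  obtain ⟨p, n₀, hp⟩ := HasPoleOnlyAtOne.coeff_eventually_eq_eval <|
    HasPoleOnlyAtOne.sum (s := Finset.univ) fun r _ ↦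
      (hC.isLowerAbove_lengthVectors (K := K) r).hasPoleOnlyAtOne
  exact ⟨p, n₀, fun n hn ↦ by
    rw [← hp n hn, card_eq_sum_latticeCount hK]
    simp [latticeSeries]⟩

end Counting

section Gridding

variable {n t u : ℕ}

/-- The number of positions whose label is less than `j`. For a monotone labelling `g` these are
the dividing lines between the positions with different labels. -/
def cutPoint (g : Fin n → Fin t) (j : Fin (t + 1)) : ℕ :=
  Finset.card {x | (g x : ℕ) < j}

lemma cutPoint_mono (g : Fin n → Fin t) : Monotone (cutPoint g) := fun _ _ hij ↦
  Finset.card_le_card <| Finset.monotone_filter_right _ fun _ _ h ↦ h.trans_le hij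

lemma cutPoint_zero (g : Fin n → Fin t) : cutPoint g 0 = 0 := by
  simp [cutPoint]

lemma cutPoint_last (g : Fin n → Fin t) : cutPoint g (Fin.last t) = n := by
  simp [cutPoint]

lemma val_lt_cutPoint_iff {g : Fin n → Fin t} (hg : Monotone g) (x : Fin n) (j : Fin (t + 1)) :
    (x : ℕ) < cutPoint g j ↔ (g x : ℕ) < j := by
  refine ⟨fun h ↦ ?_, fun h ↦ ?_⟩
  · contrapose! h
    rw [← Fin.card_Iio x]
    refine Finset.card_le_card fun y hy ↦ Finset.mem_Iio.2 ?_
    exact hg.reflect_lt (Fin.lt_def.2 ((Finset.mem_filter.1 hy).2.trans_le h))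
  · rw [← Nat.succ_le_iff, Nat.succ_eq_add_one, ← Fin.card_Iic x]
    exact Finset.card_le_card fun y hy ↦
      Finset.mem_filter.2 ⟨Finset.mem_univ _, (Fin.le_def.1 (hg (Finset.mem_Iic.1 hy))).trans_lt h⟩

lemma cutPoint_le_val_and_lt_iff {g : Fin n → Fin t} (hg : Monotone g) (x : Fin n) (k : Fin t) :
    cutPoint g k.castSucc ≤ x ∧ x < cutPoint g k.succ ↔ g x = k := by
  rw [← not_lt, val_lt_cutPoint_iff hg, val_lt_cutPoint_iff hg, Fin.ext_iff, Fin.val_castSucc,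
    Fin.val_succ]
  lia

lemma inGrid_of_labels {M : Fin t → Fin u → SignType} {π : Equiv.Perm (Fin n)}
    {col : Fin n → Fin t} {row : Fin n → Fin u} (hcol : Monotone col)
    (hrow : Monotone (row ∘ π.symm)) (hM : ∀ x, M (col x) (row x) ≠ 0)
    (hcell : ∀ x y, x < y → col x = col y → row x = row y →
      (M (col x) (row x) = 1 ↔ π x < π y)) : InGrid M π := by
  have hblock {k l x} :
      InBlock π (cutPoint col) (cutPoint (row ∘ π.symm)) k l x ↔ col x = k ∧ row x = l := by
    rw [← cutPoint_le_val_and_lt_iff hcol, InBlock, ← and_assoc,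
      cutPoint_le_val_and_lt_iff hrow (π x), Function.comp_apply, π.symm_apply_apply]
  refine ⟨_, _, cutPoint_mono col, cutPoint_mono (row ∘ π.symm), cutPoint_zero _, cutPoint_last _,
    cutPoint_zero _, cutPoint_last _, fun k l ↦ ⟨fun hkl x y hx hy hxy ↦ ?_,
      fun hkl x y hx hy hxy ↦ ?_, fun hkl x hx ↦ ?_⟩⟩
  · obtain ⟨rfl, rfl⟩ := hblock.1 hx
    obtain ⟨hc, hr⟩ := hblock.1 hy
    exact (hcell x y hxy hc.symm hr.symm).1 hkl
  · obtain ⟨rfl, rfl⟩ := hblock.1 hx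
    obtain ⟨hc, hr⟩ := hblock.1 hy
    have hne : π y ≠ π x := π.injective.ne hxy.ne'
    exact hne.lt_of_le <| not_lt.1 <| (hcell x y hxy hc.symm hr.symm).not.1 (by simp [hkl])
  · obtain ⟨rfl, rfl⟩ := hblock.1 hx
    exact hM x hkl

end Gridding

section MatchingGrid

/-- The label of a block, consisting of its ranks among the blocks by position and by value and of
its direction, ordered lexicographically. -/
abbrev BlockLabel (K : ℕ) : Type := Fin K ×ₗ Fin K ×ₗ SignType

variable {K : ℕ}

/-- Exchanges the first two components of a label. -/
def BlockLabel.swap (a : BlockLabel K) : BlockLabel K :=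
  toLex ((ofLex (ofLex a).2).1, toLex ((ofLex a).1, (ofLex (ofLex a).2).2))

lemma BlockLabel.swap_injective : Function.Injective (BlockLabel.swap (K := K)) :=
  Function.LeftInverse.injective (g := BlockLabel.swap) fun _ ↦ rfl

/-- Numbering of the labels in increasing order. -/
noncomputable def labelIso (K : ℕ) : Fin (Fintype.card (BlockLabel K)) ≃o BlockLabel K :=
  monoEquivOfFin _ rfl

/-- The matrix whose columns and rows are indexed by labels, and whose nonzero entries match each
label with its swap. -/
noncomputable def matchingMatrix (K : ℕ) (k l : Fin (Fintype.card (BlockLabel K))) : SignType :=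
  if (labelIso K k).swap = labelIso K l then (ofLex (ofLex (labelIso K k)).2).2 else 0

lemma isMatchingMat_matchingMatrix (K : ℕ) : IsMatchingMat (matchingMatrix K) := by
  have hswap {k l} (h : matchingMatrix K k l ≠ 0) : (labelIso K k).swap = labelIso K l :=
    of_not_not fun hne ↦ h (if_neg hne)
  exact ⟨fun k l l' h h' ↦ (labelIso K).injective ((hswap h).symm.trans (hswap h')),
    fun k k' l h h' ↦ (labelIso K).injective <|
      BlockLabel.swap_injective ((hswap h).trans (hswap h').symm)⟩

lemma monotone_toLex_prodMk {ι α β : Type*} [Preorder ι] [PartialOrder α] [Preorder β]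
    {f : ι → α} {g : ι → β} (hf : Monotone f) (hg : ∀ x y, f x = f y → g x = g y) :
    Monotone fun x ↦ toLex (f x, g x) := fun x y hxy ↦
  Prod.Lex.toLex_le_toLex.2 <| (hf hxy).lt_or_eq.imp_right fun h ↦ ⟨h, (hg x y h).le⟩

variable {N : ℕ} {π : Equiv.Perm (Fin N)} {x y : Fin N}

/-- The number of blocks lying below the block of `x`. -/
noncomputable def valueIndex (π : Equiv.Perm (Fin N)) (x : Fin N) : ℕ :=
  (blockIndex π '' {z | π z < π x ∧ blockIndex π z ≠ blockIndex π x}).ncard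

lemma valueIndex_lt (hK : ∀ x, blockIndex π x < K) (x : Fin N) : valueIndex π x < K := by
  rw [← Nat.card_Iio K, ← Set.ncard_coe_finset]
  refine Set.ncard_lt_ncard ⟨?_, fun h ↦ ?_⟩
  · rintro _ ⟨z, -, rfl⟩
    simpa using hK z
  · obtain ⟨z, ⟨-, hne⟩, hz⟩ := h (by simpa using hK x)
    exact hne hz

lemma valueIndex_eq_of_blockIndex_eq (hxy : blockIndex π x = blockIndex π y) :
    valueIndex π x = valueIndex π y := by
  have hset : {z | π z < π x ∧ blockIndex π z ≠ blockIndex π x} =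
      {z | π z < π y ∧ blockIndex π z ≠ blockIndex π y} := by
    ext z
    rw [Set.mem_ofPred_eq, Set.mem_ofPred_eq, ← hxy]
    exact and_congr_left fun hz ↦
      apply_lt_apply_iff_of_blockIndex_eq hxy (notMem_uIcc_of_blockIndex_ne hxy hz)
  rw [valueIndex, hset, valueIndex]

lemma valueIndex_lt_valueIndex (hne : blockIndex π x ≠ blockIndex π y) (hlt : π x < π y) :
    valueIndex π x < valueIndex π y := by
  refine Set.ncard_lt_ncard ⟨?_, fun h ↦ ?_⟩
  · rintro _ ⟨z, ⟨hzx, -⟩, rfl⟩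
    refine ⟨z, ⟨hzx.trans hlt, fun hzy ↦ ?_⟩, rfl⟩
    have := apply_gt_apply_iff_of_blockIndex_eq hzy
      (notMem_uIcc_of_blockIndex_ne hzy (hzy ▸ hne))
    exact (this.1 hzx).not_gt hlt
  · obtain ⟨z, ⟨-, hzx⟩, hz⟩ := h ⟨x, ⟨hlt, hne⟩, rfl⟩
    exact hzx hz

lemma valueIndex_eq_iff : valueIndex π x = valueIndex π y ↔ blockIndex π x = blockIndex π y := by
  refine ⟨fun h ↦ ?_, valueIndex_eq_of_blockIndex_eq⟩
  by_contra hne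
  rcases (π.injective.ne (ne_of_apply_ne _ hne)).lt_or_gt with hlt | hlt
  · exact (valueIndex_lt_valueIndex hne hlt).ne h
  · exact (valueIndex_lt_valueIndex (Ne.symm hne) hlt).ne' h

lemma valueIndex_comp_symm_monotone : Monotone (valueIndex π ∘ π.symm) := fun v w hvw ↦ by
  by_cases hblk : blockIndex π (π.symm v) = blockIndex π (π.symm w)
  · exact (valueIndex_eq_of_blockIndex_eq hblk).le
  · refine (valueIndex_lt_valueIndex hblk ?_).le
    simpa using hvw.lt_of_ne (ne_of_apply_ne (blockIndex π ∘ π.symm) hblk)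

open Classical in
/-- The direction of the `i`-th block; blocks with at most one element count as decreasing. -/
noncomputable def blockSign (K : ℕ) (π : Equiv.Perm (Fin N)) (i : Fin K) : SignType :=
  if blockOrder K π i i then 1 else -1

lemma blockSign_ne_zero (i : Fin K) : blockSign K π i ≠ 0 := by
  unfold blockSign
  split_ifs <;> simp

lemma blockSign_eq_one_iff {i : Fin K} (hx : blockIndex π x = i) (hy : blockIndex π y = i)
    (hxy : x < y) : blockSign K π i = 1 ↔ π x < π y := by
  rw [← blockOrder_iff hx hy fun _ ↦ hxy]
  unfold blockSign
  split_ifs with h <;> simp [h]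

lemma inGrid_matchingMatrix (hK : ∀ x, blockIndex π x < K) : InGrid (matchingMatrix K) π := by
  let pos (x : Fin N) : Fin K := ⟨blockIndex π x, hK x⟩
  let val (x : Fin N) : Fin K := ⟨valueIndex π x, valueIndex_lt hK x⟩
  let sgn (x : Fin N) : SignType := blockSign K π (pos x)
  have hval {x y} : val x = val y ↔ pos x = pos y := by
    simpa only [val, pos, Fin.mk.injEq] using valueIndex_eq_iff
  let label (x : Fin N) : BlockLabel K := toLex (pos x, toLex (val x, sgn x))
  have hM (x : Fin N) : matchingMatrix K ((labelIso K).symm (label x))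
      ((labelIso K).symm (label x).swap) = sgn x := by
    rw [matchingMatrix, OrderIso.apply_symm_apply, OrderIso.apply_symm_apply, if_pos rfl]
    rfl
  have hcol : Monotone label := monotone_toLex_prodMk (f := pos) blockIndex_mono fun x y h ↦ by
    simp only [hval.2 h, sgn, h]
  have hrow : Monotone fun v ↦ (label (π.symm v)).swap :=
    monotone_toLex_prodMk (f := val ∘ π.symm) valueIndex_comp_symm_monotone fun v w h ↦ by
      simp only [label, ofLex_toLex, hval.1 h, sgn]
  refine inGrid_of_labels (row := fun x ↦ (labelIso K).symm (label x).swap)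
    ((labelIso K).symm.monotone.comp hcol)
    ((labelIso K).symm.monotone.comp hrow) (fun x ↦ ?_) fun x y hxy hlabel _ ↦ ?_
  · exact (hM x).trans_ne (blockSign_ne_zero _)
  · have hpos : pos x = pos y :=
      congrArg (fun a ↦ (ofLex a).1) ((labelIso K).symm.injective hlabel)
    exact (hM x).congr_left.trans (blockSign_eq_one_iff rfl (Fin.ext_iff.1 hpos.symm) hxy)

end MatchingGrid

/-- **The Fibonacci dichotomy (Kaiser–Klazar).** For every permutation class `C`, exactly
one of the following occurs: either `|C_n| ≥ F_n` for all `n` (`F_1 = F_2 = 1`), or `C`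
lies in the grid class of a matching and `|C_n|` agrees with a polynomial for all
sufficiently large `n`. -/
theorem fibonacci_dichotomy (C : ∀ n : ℕ, Set (Equiv.Perm (Fin n))) (hC : IsPermClass C) :
    Xor' (∀ n : ℕ, Nat.fib n ≤ Nat.card (C n))
      (∃ (t u : ℕ) (M : Fin t → Fin u → SignType), IsMatchingMat M ∧
        (∀ n : ℕ, ∀ π ∈ C n, InGrid M π) ∧
        ∃ (p : Polynomial ℚ) (N : ℕ), ∀ n : ℕ, N ≤ n →
          (Nat.card (C n) : ℚ) = p.eval (n : ℚ)) := by
  by_cases hall : ∀ n : ℕ, Nat.fib n ≤ Nat.card (C n)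
  · refine Or.inl ⟨hall, fun ⟨_, _, _, _, _, p, N, hp⟩ ↦ not_eventually_fib_le_eval p ?_⟩
    filter_upwards [Filter.eventually_ge_atTop N] with n hn
    rw [← hp n hn]
    exact_mod_cast hall n
  · refine Or.inr ⟨?_, hall⟩
    push Not at hall
    obtain ⟨_ | n, hn⟩ := hall
    · simp at hn
    have hK (N : ℕ) (π : Equiv.Perm (Fin N)) (hπ : π ∈ C N) (x : Fin N) :
        blockIndex π x < 2 * n ^ 4 + 1 :=
      Nat.lt_succ_of_le <| (blockIndex_le_card x).trans (hC.card_nonBonds_le hπ hn)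
    exact ⟨_, _, matchingMatrix _, isMatchingMat_matchingMatrix _,
      fun N π hπ ↦ inGrid_matchingMatrix (hK N π hπ), hC.exists_polynomial_card_eq hK⟩
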